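/- Let A and B be groups, a ∈ A and b ∈ B, and let π : (A × B)/⟪(a,b)⟫ → (A/⟪a⟫) × (B/⟪b⟫) be the homomorphism induced by the identity map on A × B. Then the kernel of π is abelian and is generated by the two elements given by the images of (a, 1) and (1, b) in (A × B)/⟪(a,b)⟫; in particular, ker π is abelian of rank at most 2. -/

import Mathlib

/-!
In `(A × B)/⟪(a, b)⟫` the image of `(a, 1)` is the inverse of the image of `(1, b)`. The former
commutes with the image of `B` and the latter with the image of `A`, so both are central. The kernel
of `π` is the image of `⟪a⟫ × ⟪b⟫ = ⟪(a, 1), (1, b)⟫`, hence the normal closure of these two images,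
and the normal closure of a set of central elements is the subgroup it generates.
-/

section NormalClosure

variable {G : Type*} [Group G]

theorem normal_of_le_center {H : Subgroup G} (hH : H ≤ Subgroup.center G) : H.Normal where
  conj_mem h hh g := by
    rwa [Subgroup.mem_center_iff.mp (hH hh) g, mul_inv_cancel_right]

theorem normalClosure_eq_closure_of_subset_center {s : Set G} (hs : s ⊆ Subgroup.center G) :
    Subgroup.normalClosure s = Subgroup.closure s :=
  have : (Subgroup.closure s).Normal := normal_of_le_center ((Subgroup.closure_le _).mpr hs)
  le_antisymm (Subgroup.normalClosure_le_normal Subgroup.subset_closure)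
    Subgroup.closure_le_normalClosure

theorem normalClosure_prod_normalClosure {H : Type*} [Group H] (s : Set G) (t : Set H) :
    (Subgroup.normalClosure s).prod (Subgroup.normalClosure t) =
      Subgroup.normalClosure (MonoidHom.inl G H '' s ∪ MonoidHom.inr G H '' t) := by
  apply le_antisymm
  · rw [Subgroup.prod_le_iff]
    exact ⟨(Subgroup.map_normalClosure_le s _).trans
        (Subgroup.normalClosure_mono Set.subset_union_left),
      (Subgroup.map_normalClosure_le t _).trans
        (Subgroup.normalClosure_mono Set.subset_union_right)⟩
  · apply Subgroup.normalClosure_le_normal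
    rintro _ (⟨x, hx, rfl⟩ | ⟨y, hy, rfl⟩)
    · exact ⟨Subgroup.subset_normalClosure hx, one_mem _⟩
    · exact ⟨one_mem _, Subgroup.subset_normalClosure hy⟩

end NormalClosure

theorem map_ker_comp_of_surjective {G H K : Type*} [Group G] [Group H] [MulOneClass K] (g : H →* K)
    {f : G →* H} (hf : Function.Surjective f) : (g.comp f).ker.map f = g.ker := by
  rw [← MonoidHom.comap_ker, Subgroup.map_comap_eq_self_of_surjective hf]

section Prod

variable {A B G : Type*} [Group G]

section MulOneClass

variable [MulOneClass A] [MulOneClass B] {f : A × B →* G} {a : A} {b : B}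

theorem map_mk_one_eq_inv_of_map_eq_one (hab : f (a, b) = 1) : f (a, 1) = (f (1, b))⁻¹ := by
  rw [eq_inv_iff_mul_eq_one, ← map_mul, Prod.mk_mul_mk, mul_one, one_mul, hab]

theorem commute_map_mk_one_of_map_eq_one (hab : f (a, b) = 1) (p : A × B) :
    Commute (f (a, 1)) (f p) := by
  have commute_left : Commute (f (a, 1)) (f (p.1, 1)) := by
    rw [map_mk_one_eq_inv_of_map_eq_one hab]
    exact ((MonoidHom.commute_inl_inr p.1 b).map f).symm.inv_left
  have commute_right : Commute (f (a, 1)) (f (1, p.2)) :=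
    (MonoidHom.commute_inl_inr a p.2).map f
  rw [← Prod.fst_mul_snd p, map_mul]
  exact commute_left.mul_right commute_right

theorem map_mk_one_pair_subset_center (hf : Function.Surjective f) (hab : f (a, b) = 1) :
    {f (a, 1), f (1, b)} ⊆ (Subgroup.center G : Set G) := by
  have left_mem : f (a, 1) ∈ Subgroup.center G :=
    Subgroup.mem_center_iff.mpr <| hf.forall.mpr fun p ↦
      (commute_map_mk_one_of_map_eq_one hab p).symm
  have right_mem : f (1, b) ∈ Subgroup.center G := by
    rwa [map_mk_one_eq_inv_of_map_eq_one hab, inv_mem_iff] at left_mem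
  exact Set.pair_subset left_mem right_mem

end MulOneClass

theorem map_prod_normalClosure_singleton [Group A] [Group B] {f : A × B →* G} {a : A} {b : B}
    (hf : Function.Surjective f) (hab : f (a, b) = 1) :
    ((Subgroup.normalClosure {a}).prod (Subgroup.normalClosure {b})).map f =
      Subgroup.closure {f (a, 1), f (1, b)} := by
  rw [← normalClosure_eq_closure_of_subset_center (map_mk_one_pair_subset_center hf hab),
    normalClosure_prod_normalClosure, Subgroup.map_normalClosure _ _ hf]
  simp only [Set.image_singleton, Set.image_pair, MonoidHom.inl_apply, MonoidHom.inr_apply,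
    Set.singleton_union]

end Prod

/-- Let `A`, `B` be groups, `a ∈ A`, `b ∈ B`, and let
`π : (A × B)/⟪(a,b)⟫ → (A/⟪a⟫) × (B/⟪b⟫)` be the homomorphism induced by the
identity of `A × B` (characterized by `π ∘ mk = (mk, mk)`).  Then `ker π` is
abelian and is generated by the images of `(a, 1)` and `(1, b)`; in
particular it is abelian of rank at most `2`. -/
theorem stmt_8 {A B : Type*} [Group A] [Group B] (a : A) (b : B)
    (π : (A × B) ⧸ Subgroup.normalClosure {(a, b)} →*
      (A ⧸ Subgroup.normalClosure {a}) × (B ⧸ Subgroup.normalClosure {b}))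
    (hπ : ∀ p : A × B, π (QuotientGroup.mk p) =
      ((QuotientGroup.mk p.1 : A ⧸ Subgroup.normalClosure {a}),
       (QuotientGroup.mk p.2 : B ⧸ Subgroup.normalClosure {b}))) :
    (∀ x ∈ π.ker, ∀ y ∈ π.ker, x * y = y * x) ∧
    π.ker = Subgroup.closure
      {(QuotientGroup.mk ((a, 1) : A × B) :
          (A × B) ⧸ Subgroup.normalClosure {(a, b)}),
       (QuotientGroup.mk ((1, b) : A × B) :
          (A × B) ⧸ Subgroup.normalClosure {(a, b)})} := by
  let f := QuotientGroup.mk' (Subgroup.normalClosure {(a, b)})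
  have hf : Function.Surjective f := QuotientGroup.mk'_surjective _
  have hab : f (a, b) = 1 :=
    (QuotientGroup.eq_one_iff _).mpr (Subgroup.subset_normalClosure (Set.mem_singleton _))
  have ker_comp : (π.comp f).ker =
      (Subgroup.normalClosure {a}).prod (Subgroup.normalClosure {b}) := by
    ext p
    simp only [f, MonoidHom.mem_ker, MonoidHom.comp_apply, QuotientGroup.mk'_apply, hπ,
      Prod.mk_eq_one, QuotientGroup.eq_one_iff, Subgroup.mem_prod]
  have ker_eq : π.ker = Subgroup.closure {f (a, 1), f (1, b)} := by
    rw [← map_ker_comp_of_surjective π hf, ker_comp, map_prod_normalClosure_singleton hf hab]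
  have ker_le_center : π.ker ≤ Subgroup.center _ := by
    rw [ker_eq, Subgroup.closure_le]
    exact map_mk_one_pair_subset_center hf hab
  exact ⟨fun x _ y hy ↦ Subgroup.mem_center_iff.mp (ker_le_center hy) x, ker_eq⟩
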